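/- If (T, f) solves the Duffing boundary value problem for (m, β), then T = K(k) / (2m² + β²)^{1/4}, where k = √((1 + β/√(2m² + β²))/2) and K(k) is the complete elliptic integral of the first kind. -/

import Mathlib

/-!
The function `√2 k ω cn(ω t, k)` solves `x'' = -x³ + ω² (2k² - 1) x`. Matching coefficients with
`β = ω² (2k² - 1)` and the initial speed with `m = √2 k √(1 - k²) ω²` forces `ω⁴ = 2m² + β²` and
`2k² = 1 + β / ω²`. Shifting the phase so that the wave starts from a zero, uniqueness for the
initial value problem identifies it with the given solution on all of `[-T, T]`. Both are
positive from their common zero `-T` up to their next zero, and consecutive zeros of the wave are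
`2 K(k) / ω` apart, so `2T = 2 K(k) / ω`.

The function `cn` is the cosine of the Jacobi amplitude, the inverse of the incomplete elliptic
integral `F(φ, k)`. Working with `F` in the angle variable keeps every differential identity free
of the singularity of the integrand of `K(k)` at `x = 1`, which enters only through the
substitution `x = sin θ`.
-/

open Real

/-- The Duffing boundary value problem for `(m, β)`: a time `T > 0` and a `C^∞` function
`f` with `f'' = -f³ + β·f` on `[-T, T]`, boundary values `f(±T) = 0`,
`f'(-T) = m`, `f'(T) = -m`, and `f > 0` on `(-T, T)`. -/
def IsDuffingSolution (m : ℕ) (β T : ℝ) (f : ℝ → ℝ) : Prop :=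
  0 < T ∧ ContDiff ℝ (⊤ : ℕ∞) f ∧
    (∀ t ∈ Set.Icc (-T) T, deriv (deriv f) t = -(f t) ^ 3 + β * f t) ∧
    f (-T) = 0 ∧ f T = 0 ∧ deriv f (-T) = (m : ℝ) ∧ deriv f T = -(m : ℝ) ∧
    (∀ t ∈ Set.Ioo (-T) T, 0 < f t)


/-- The elliptic modulus `k = √((1 + β/√(2m² + β²))/2)` associated to `(m, β)`. -/
noncomputable def duffingModulus (m : ℕ) (β : ℝ) : ℝ :=
  Real.sqrt ((1 + β / Real.sqrt (2 * (m : ℝ) ^ 2 + β ^ 2)) / 2)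

section Uniqueness

open Set

variable {E : Type*} [NormedAddCommGroup E] [NormedSpace ℝ E] {a b : ℝ}

theorem ODE_solution_unique_of_locallyLipschitz {V : E → E} (hV : LocallyLipschitz V)
    {γ₁ γ₂ : ℝ → E} (h₁ : ∀ t ∈ Icc a b, HasDerivWithinAt γ₁ (V (γ₁ t)) (Icc a b) t)
    (h₂ : ∀ t ∈ Icc a b, HasDerivWithinAt γ₂ (V (γ₂ t)) (Icc a b) t) (ha : γ₁ a = γ₂ a) :
    EqOn γ₁ γ₂ (Icc a b) := by
  have hc₁ : ContinuousOn γ₁ (Icc a b) := fun t ht ↦ (h₁ t ht).continuousWithinAt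
  have hc₂ : ContinuousOn γ₂ (Icc a b) := fun t ht ↦ (h₂ t ht).continuousWithinAt
  have hcompact : IsCompact (γ₁ '' Icc a b ∪ γ₂ '' Icc a b) :=
    (isCompact_Icc.image_of_continuousOn hc₁).union (isCompact_Icc.image_of_continuousOn hc₂)
  obtain ⟨C, hC⟩ := hV.locallyLipschitzOn.exists_lipschitzOnWith_of_compact hcompact
  have right_deriv {γ : ℝ → E} (h : ∀ t ∈ Icc a b, HasDerivWithinAt γ (V (γ t)) (Icc a b) t)
      (t : ℝ) (ht : t ∈ Ico a b) : HasDerivWithinAt γ (V (γ t)) (Ici t) t :=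
    (h t (Ico_subset_Icc_self ht)).mono_of_mem_nhdsWithin (Icc_mem_nhdsGE_of_mem ht)
  exact ODE_solution_unique_of_mem_Icc_right (v := fun _ ↦ V) (fun _ _ ↦ hC)
    hc₁ (right_deriv h₁) (fun t ht ↦ .inl (mem_image_of_mem _ (Ico_subset_Icc_self ht)))
    hc₂ (right_deriv h₂) (fun t ht ↦ .inr (mem_image_of_mem _ (Ico_subset_Icc_self ht))) ha

theorem ODE_second_order_solution_unique_of_locallyLipschitz {F : E → E}
    (hF : LocallyLipschitz F) {x x' y y' : ℝ → E}
    (hx : ∀ t ∈ Icc a b, HasDerivWithinAt x (x' t) (Icc a b) t)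
    (hx' : ∀ t ∈ Icc a b, HasDerivWithinAt x' (F (x t)) (Icc a b) t)
    (hy : ∀ t ∈ Icc a b, HasDerivWithinAt y (y' t) (Icc a b) t)
    (hy' : ∀ t ∈ Icc a b, HasDerivWithinAt y' (F (y t)) (Icc a b) t)
    (ha : x a = y a) (ha' : x' a = y' a) : EqOn x y (Icc a b) := by
  have hV : LocallyLipschitz fun p : E × E ↦ (p.2, F p.1) :=
    LipschitzWith.prod_snd.locallyLipschitz.prodMk
      (hF.comp LipschitzWith.prod_fst.locallyLipschitz)
  have h := ODE_solution_unique_of_locallyLipschitz hV (γ₁ := fun t ↦ (x t, x' t))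
    (γ₂ := fun t ↦ (y t, y' t)) (fun t ht ↦ (hx t ht).prodMk (hx' t ht))
    (fun t ht ↦ (hy t ht).prodMk (hy' t ht)) (by simp only [ha, ha'])
  exact fun t ht ↦ congrArg Prod.fst (h ht)

end Uniqueness

section EllipticIntegrals

open Set MeasureTheory Filter

/-- The incomplete elliptic integral of the first kind `F(φ, k)`, in terms of the modulus `k`. -/
noncomputable def ellipticF (k φ : ℝ) : ℝ :=
  ∫ θ in (0 : ℝ)..φ, 1 / √(1 - k ^ 2 * sin θ ^ 2)

/-- The complete elliptic integral of the first kind `K(k)`, in terms of the modulus `k`. -/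
noncomputable def ellipticK (k : ℝ) : ℝ :=
  ∫ x in (0 : ℝ)..1, 1 / (√(1 - x ^ 2) * √(1 - k ^ 2 * x ^ 2))

variable {k : ℝ}

theorem ellipticF_neg (k φ : ℝ) : ellipticF k (-φ) = -ellipticF k φ := by
  have h := intervalIntegral.integral_comp_neg (a := 0) (b := φ)
    fun θ ↦ 1 / √(1 - k ^ 2 * sin θ ^ 2)
  simp only [sin_neg, neg_sq, neg_zero] at h
  rw [ellipticF, ellipticF, intervalIntegral.integral_symm, h]

theorem ellipticF_pi_div_two (k : ℝ) : ellipticF k (π / 2) = ellipticK k := by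
  have hsubst := integral_Icc_deriv_smul_of_deriv_nonneg
    (g := fun x ↦ 1 / (√(1 - x ^ 2) * √(1 - k ^ 2 * x ^ 2))) (a := 0) (b := π / 2)
    continuous_sin.continuousOn (fun θ _ ↦ hasDerivAt_sin θ)
    (fun θ hθ ↦ cos_nonneg_of_mem_Icc ⟨by linarith [hθ.1, pi_pos], hθ.2.le⟩) (by positivity)
  rw [sin_zero, sin_pi_div_two] at hsubst
  rw [ellipticF, ellipticK, intervalIntegral.integral_of_le (by positivity),
    intervalIntegral.integral_of_le zero_le_one, ← integral_Icc_eq_integral_Ioc,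
    ← integral_Icc_eq_integral_Ioc, ← hsubst, integral_Icc_eq_integral_Ioo,
    integral_Icc_eq_integral_Ioo]
  refine setIntegral_congr_fun measurableSet_Ioo fun θ hθ ↦ ?_
  have hcos : 0 < cos θ := cos_pos_of_mem_Ioo ⟨by linarith [hθ.1, pi_pos], hθ.2⟩
  simp only [← cos_sq', Real.sqrt_sq hcos.le, smul_eq_mul]
  field_simp

theorem one_sub_sq_mul_sin_sq_pos (hk : k ^ 2 < 1) (θ : ℝ) : 0 < 1 - k ^ 2 * sin θ ^ 2 := by
  nlinarith [sin_sq_le_one θ, sq_nonneg k]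

theorem hasDerivAt_ellipticF (hk : k ^ 2 < 1) (φ : ℝ) :
    HasDerivAt (ellipticF k) (1 / √(1 - k ^ 2 * sin φ ^ 2)) φ := by
  have hcont : Continuous fun θ ↦ 1 / √(1 - k ^ 2 * sin θ ^ 2) :=
    continuous_const.div (by fun_prop) fun θ ↦ (sqrt_pos.2 (one_sub_sq_mul_sin_sq_pos hk θ)).ne'
  exact (hcont.integral_hasStrictDerivAt 0 φ).hasDerivAt

theorem strictMono_ellipticF (hk : k ^ 2 < 1) : StrictMono (ellipticF k) :=
  strictMono_of_hasDerivAt_pos (hasDerivAt_ellipticF hk)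
    fun φ ↦ one_div_pos.2 (sqrt_pos.2 (one_sub_sq_mul_sin_sq_pos hk φ))

theorem sub_le_ellipticF_sub (hk : k ^ 2 < 1) {φ ψ : ℝ} (h : φ ≤ ψ) :
    ψ - φ ≤ ellipticF k ψ - ellipticF k φ := by
  have hderiv (θ : ℝ) : 1 ≤ deriv (ellipticF k) θ := by
    rw [(hasDerivAt_ellipticF hk θ).deriv,
      one_le_div (sqrt_pos.2 (one_sub_sq_mul_sin_sq_pos hk θ)), sqrt_le_one]
    nlinarith [sq_nonneg (k * sin θ)]
  simpa only [one_mul] using mul_sub_le_image_sub_of_le_deriv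
    (fun θ ↦ (hasDerivAt_ellipticF hk θ).differentiableAt) hderiv h

theorem surjective_ellipticF (hk : k ^ 2 < 1) : Function.Surjective (ellipticF k) := by
  have hzero : ellipticF k 0 = 0 := intervalIntegral.integral_same
  refine Continuous.surjective
    (continuous_iff_continuousAt.2 fun φ ↦ (hasDerivAt_ellipticF hk φ).continuousAt)
    (tendsto_atTop_mono' _ ?_ tendsto_id) (tendsto_atBot_mono' _ ?_ tendsto_id)
  · filter_upwards [eventually_ge_atTop 0] with φ hφ
    simpa [hzero] using sub_le_ellipticF_sub hk hφ
  · filter_upwards [eventually_le_atBot 0] with φ hφ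
    simpa [hzero] using sub_le_ellipticF_sub hk hφ

theorem ellipticK_pos (hk : k ^ 2 < 1) : 0 < ellipticK k := by
  have h := strictMono_ellipticF hk (show 0 < π / 2 by positivity)
  rwa [ellipticF_pi_div_two, ellipticF, intervalIntegral.integral_same] at h

end EllipticIntegrals

section JacobiFunctions

open Set

/-- The Jacobi amplitude `am(u, k)`, the inverse of `φ ↦ F(φ, k)`; a junk value unless
`k ^ 2 < 1`. -/
noncomputable def jacobiAm (k : ℝ) : ℝ → ℝ := Function.invFun (ellipticF k)

/-- The Jacobi elliptic sine `sn(u, k)`. -/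
noncomputable def jacobiSn (k u : ℝ) : ℝ := sin (jacobiAm k u)

/-- The Jacobi elliptic cosine `cn(u, k)`. -/
noncomputable def jacobiCn (k u : ℝ) : ℝ := cos (jacobiAm k u)

/-- The Jacobi delta amplitude `dn(u, k)`. -/
noncomputable def jacobiDn (k u : ℝ) : ℝ := √(1 - k ^ 2 * jacobiSn k u ^ 2)

variable {k : ℝ}

theorem ellipticF_jacobiAm (hk : k ^ 2 < 1) (u : ℝ) : ellipticF k (jacobiAm k u) = u :=
  Function.rightInverse_invFun (surjective_ellipticF hk) u

theorem jacobiAm_ellipticF (hk : k ^ 2 < 1) (φ : ℝ) : jacobiAm k (ellipticF k φ) = φ :=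
  Function.leftInverse_invFun (strictMono_ellipticF hk).injective φ

theorem strictMono_jacobiAm (hk : k ^ 2 < 1) : StrictMono (jacobiAm k) := fun u v huv ↦ by
  rwa [← (strictMono_ellipticF hk).lt_iff_lt, ellipticF_jacobiAm hk, ellipticF_jacobiAm hk]

theorem continuous_jacobiAm (hk : k ^ 2 < 1) : Continuous (jacobiAm k) :=
  (strictMono_jacobiAm hk).monotone.continuous_of_surjective
    (Function.LeftInverse.surjective (jacobiAm_ellipticF hk))

theorem jacobiAm_ellipticK (hk : k ^ 2 < 1) : jacobiAm k (ellipticK k) = π / 2 := by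
  rw [← ellipticF_pi_div_two, jacobiAm_ellipticF hk]

theorem jacobiAm_neg_ellipticK (hk : k ^ 2 < 1) : jacobiAm k (-ellipticK k) = -(π / 2) := by
  rw [← ellipticF_pi_div_two, ← ellipticF_neg, jacobiAm_ellipticF hk]

theorem jacobiCn_ellipticK (hk : k ^ 2 < 1) : jacobiCn k (ellipticK k) = 0 := by
  rw [jacobiCn, jacobiAm_ellipticK hk, cos_pi_div_two]

theorem jacobiCn_neg_ellipticK (hk : k ^ 2 < 1) : jacobiCn k (-ellipticK k) = 0 := by
  rw [jacobiCn, jacobiAm_neg_ellipticK hk, cos_neg, cos_pi_div_two]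

theorem jacobiSn_neg_ellipticK (hk : k ^ 2 < 1) : jacobiSn k (-ellipticK k) = -1 := by
  rw [jacobiSn, jacobiAm_neg_ellipticK hk, sin_neg, sin_pi_div_two]

theorem jacobiDn_neg_ellipticK (hk : k ^ 2 < 1) : jacobiDn k (-ellipticK k) = √(1 - k ^ 2) := by
  rw [jacobiDn, jacobiSn_neg_ellipticK hk, neg_one_sq, mul_one]

theorem jacobiCn_pos (hk : k ^ 2 < 1) {u : ℝ} (hu : u ∈ Ioo (-ellipticK k) (ellipticK k)) :
    0 < jacobiCn k u := by
  refine cos_pos_of_mem_Ioo ⟨?_, ?_⟩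
  · rw [← jacobiAm_neg_ellipticK hk]
    exact strictMono_jacobiAm hk hu.1
  · rw [← jacobiAm_ellipticK hk]
    exact strictMono_jacobiAm hk hu.2

theorem jacobiSn_sq_add_jacobiCn_sq (k u : ℝ) : jacobiSn k u ^ 2 + jacobiCn k u ^ 2 = 1 :=
  sin_sq_add_cos_sq _

theorem jacobiDn_pos (hk : k ^ 2 < 1) (u : ℝ) : 0 < jacobiDn k u :=
  sqrt_pos.2 (one_sub_sq_mul_sin_sq_pos hk _)

theorem jacobiDn_sq (hk : k ^ 2 < 1) (u : ℝ) : jacobiDn k u ^ 2 = 1 - k ^ 2 * jacobiSn k u ^ 2 :=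
  sq_sqrt (one_sub_sq_mul_sin_sq_pos hk _).le

theorem hasDerivAt_jacobiAm (hk : k ^ 2 < 1) (u : ℝ) :
    HasDerivAt (jacobiAm k) (jacobiDn k u) u := by
  have h := (hasDerivAt_ellipticF hk (jacobiAm k u)).of_local_left_inverse
    (continuous_jacobiAm hk).continuousAt (one_div_pos.2 (jacobiDn_pos hk u)).ne'
    (.of_forall (ellipticF_jacobiAm hk))
  simpa only [one_div, inv_inv, jacobiDn, jacobiSn] using h

theorem hasDerivAt_jacobiSn (hk : k ^ 2 < 1) (u : ℝ) :
    HasDerivAt (jacobiSn k) (jacobiCn k u * jacobiDn k u) u :=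
  (hasDerivAt_jacobiAm hk u).sin

theorem hasDerivAt_jacobiCn (hk : k ^ 2 < 1) (u : ℝ) :
    HasDerivAt (jacobiCn k) (-jacobiSn k u * jacobiDn k u) u :=
  (hasDerivAt_jacobiAm hk u).cos

theorem hasDerivAt_jacobiDn (hk : k ^ 2 < 1) (u : ℝ) :
    HasDerivAt (jacobiDn k) (-k ^ 2 * jacobiSn k u * jacobiCn k u) u := by
  have hradicand : HasDerivAt (fun v ↦ 1 - k ^ 2 * jacobiSn k v ^ 2)
      (-(2 * k ^ 2 * jacobiSn k u * (jacobiCn k u * jacobiDn k u))) u := by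
    refine (((hasDerivAt_jacobiSn hk u).pow 2).const_mul (k ^ 2)).const_sub 1 |>.congr_deriv ?_
    push_cast
    ring
  refine (hradicand.sqrt (one_sub_sq_mul_sin_sq_pos hk _).ne').congr_deriv ?_
  have hdn := (jacobiDn_pos hk u).ne'
  rw [← jacobiDn]
  field_simp

theorem hasDerivAt_neg_jacobiSn_mul_jacobiDn (hk : k ^ 2 < 1) (u : ℝ) :
    HasDerivAt (fun v ↦ -jacobiSn k v * jacobiDn k v)
      ((2 * k ^ 2 - 1) * jacobiCn k u - 2 * k ^ 2 * jacobiCn k u ^ 3) u := by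
  refine ((hasDerivAt_jacobiSn hk u).neg.mul (hasDerivAt_jacobiDn hk u)).congr_deriv ?_
  simp only [Pi.neg_apply]
  linear_combination -jacobiCn k u * jacobiDn_sq hk u
    + 2 * k ^ 2 * jacobiCn k u * jacobiSn_sq_add_jacobiCn_sq k u

end JacobiFunctions

section Duffing

open Set

variable {k ω a b m β T : ℝ} {f f' : ℝ → ℝ}

/-- The solution `√2 k ω cn(ω (t - a) - K(k), k)` of the Duffing equation
`x'' = -x ^ 3 + ω ^ 2 (2 k ^ 2 - 1) x`, with its phase chosen so that it vanishes at `t = a` and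
is positive immediately after. -/
noncomputable def duffingWave (k ω a t : ℝ) : ℝ :=
  √2 * k * ω * jacobiCn k (ω * (t - a) - ellipticK k)

/-- The time derivative of `duffingWave`. -/
noncomputable def duffingWaveDeriv (k ω a t : ℝ) : ℝ :=
  √2 * k * ω ^ 2 * (-jacobiSn k (ω * (t - a) - ellipticK k) *
    jacobiDn k (ω * (t - a) - ellipticK k))

theorem hasDerivAt_phase (k ω a t : ℝ) :
    HasDerivAt (fun s ↦ ω * (s - a) - ellipticK k) ω t := by
  simpa using (((hasDerivAt_id t).sub_const a).const_mul ω).sub_const (ellipticK k)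

theorem hasDerivAt_duffingWave (hk : k ^ 2 < 1) (ω a t : ℝ) :
    HasDerivAt (duffingWave k ω a) (duffingWaveDeriv k ω a t) t := by
  refine (((hasDerivAt_jacobiCn hk _).comp t (hasDerivAt_phase k ω a t)).const_mul _).congr_deriv ?_
  rw [duffingWaveDeriv]
  ring

theorem hasDerivAt_duffingWaveDeriv (hk : k ^ 2 < 1) (ω a t : ℝ) :
    HasDerivAt (duffingWaveDeriv k ω a)
      (-duffingWave k ω a t ^ 3 + ω ^ 2 * (2 * k ^ 2 - 1) * duffingWave k ω a t) t := by
  refine (((hasDerivAt_neg_jacobiSn_mul_jacobiDn hk _).comp t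
    (hasDerivAt_phase k ω a t)).const_mul _).congr_deriv ?_
  have hsqrt : √2 ^ 2 = 2 := sq_sqrt zero_le_two
  rw [duffingWave]
  linear_combination √2 * k ^ 3 * ω ^ 3 * jacobiCn k (ω * (t - a) - ellipticK k) ^ 3 * hsqrt

theorem duffingWave_self (hk : k ^ 2 < 1) (ω a : ℝ) : duffingWave k ω a a = 0 := by
  rw [duffingWave, sub_self, mul_zero, zero_sub, jacobiCn_neg_ellipticK hk, mul_zero]

theorem duffingWaveDeriv_self (hk : k ^ 2 < 1) (ω a : ℝ) :
    duffingWaveDeriv k ω a a = √2 * k * ω ^ 2 * √(1 - k ^ 2) := by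
  rw [duffingWaveDeriv, sub_self, mul_zero, zero_sub, jacobiSn_neg_ellipticK hk,
    jacobiDn_neg_ellipticK hk, neg_neg, one_mul]

theorem duffingWave_add_two_mul_ellipticK_div (hk : k ^ 2 < 1) (hω : ω ≠ 0) (a : ℝ) :
    duffingWave k ω a (a + 2 * ellipticK k / ω) = 0 := by
  have hphase : ω * (a + 2 * ellipticK k / ω - a) - ellipticK k = ellipticK k := by
    field_simp
    ring
  rw [duffingWave, hphase, jacobiCn_ellipticK hk, mul_zero]

theorem duffingWave_pos (hk₀ : 0 < k) (hk : k ^ 2 < 1) (hω : 0 < ω) {t : ℝ}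
    (ht : t ∈ Ioo a (a + 2 * ellipticK k / ω)) : 0 < duffingWave k ω a t := by
  have hlt : (t - a) * ω < 2 * ellipticK k := (lt_div_iff₀ hω).1 (by linarith [ht.2])
  have hpos : 0 < ω * (t - a) := mul_pos hω (sub_pos.2 ht.1)
  exact mul_pos (by positivity) (jacobiCn_pos hk ⟨by linarith, by linarith⟩)

theorem eqOn_duffingWave (hk : k ^ 2 < 1)
    (hf : ∀ t ∈ Icc a b, HasDerivWithinAt f (f' t) (Icc a b) t)
    (hf' : ∀ t ∈ Icc a b,
      HasDerivWithinAt f' (-f t ^ 3 + ω ^ 2 * (2 * k ^ 2 - 1) * f t) (Icc a b) t)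
    (ha : f a = 0) (ha' : f' a = √2 * k * ω ^ 2 * √(1 - k ^ 2)) :
    EqOn f (duffingWave k ω a) (Icc a b) := by
  have hF : ContDiff ℝ 1 fun x : ℝ ↦ -x ^ 3 + ω ^ 2 * (2 * k ^ 2 - 1) * x := by fun_prop
  exact ODE_second_order_solution_unique_of_locallyLipschitz hF.locallyLipschitz hf hf'
    (fun t _ ↦ (hasDerivAt_duffingWave hk ω a t).hasDerivWithinAt)
    (fun t _ ↦ (hasDerivAt_duffingWaveDeriv hk ω a t).hasDerivWithinAt)
    (ha.trans (duffingWave_self hk ω a).symm) (ha'.trans (duffingWaveDeriv_self hk ω a).symm)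

theorem sub_eq_two_mul_ellipticK_div_of_eqOn_duffingWave (hk₀ : 0 < k) (hk : k ^ 2 < 1)
    (hω : 0 < ω) (hab : a < b) (hf : EqOn f (duffingWave k ω a) (Icc a b)) (hb : f b = 0)
    (hpos : ∀ t ∈ Ioo a b, 0 < f t) : b - a = 2 * ellipticK k / ω := by
  have hK : 0 < 2 * ellipticK k / ω := div_pos (mul_pos two_pos (ellipticK_pos hk)) hω
  rcases lt_trichotomy b (a + 2 * ellipticK k / ω) with hlt | heq | hgt
  · have hwave := duffingWave_pos hk₀ hk hω ⟨hab, hlt⟩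
    rw [← hf (right_mem_Icc.2 hab.le), hb] at hwave
    exact absurd hwave (lt_irrefl 0)
  · exact sub_eq_iff_eq_add'.2 heq
  · have hmem : a + 2 * ellipticK k / ω ∈ Ioo a b := ⟨by linarith, hgt⟩
    have hwave := hpos _ hmem
    rw [hf (Ioo_subset_Icc_self hmem), duffingWave_add_two_mul_ellipticK_div hk hω.ne'] at hwave
    exact absurd hwave (lt_irrefl 0)

theorem abs_lt_sqrt_two_mul_sq_add_sq (hm : m ≠ 0) (β : ℝ) : |β| < √(2 * m ^ 2 + β ^ 2) := by
  rw [← sqrt_sq_eq_abs]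
  exact sqrt_lt_sqrt (sq_nonneg β) (lt_add_of_pos_left _ (by positivity))

theorem half_one_add_div_mem_Ioo {S : ℝ} (h : |β| < S) : (1 + β / S) / 2 ∈ Ioo 0 1 := by
  have hS : 0 < S := (abs_nonneg β).trans_lt h
  have hlow : -1 < β / S := (lt_div_iff₀ hS).2 (by linarith [(abs_lt.1 h).1])
  have hupp : β / S < 1 := (div_lt_one hS).2 (abs_lt.1 h).2
  exact ⟨by linarith, by linarith⟩

theorem sqrt_two_mul_mul_mul_sqrt_one_sub_sq {S : ℝ} (hk₀ : 0 ≤ k) (hk : k ^ 2 ≤ 1) (hS₀ : 0 ≤ S)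
    (hm : 0 ≤ m) (hS : S ^ 2 = 2 * m ^ 2 + β ^ 2) (hβ : S * (2 * k ^ 2 - 1) = β) :
    √2 * k * S * √(1 - k ^ 2) = m := by
  have hsq : (√2 * k * S * √(1 - k ^ 2)) ^ 2 = m ^ 2 := by
    simp only [mul_pow, sq_sqrt zero_le_two, sq_sqrt (sub_nonneg.2 hk)]
    linear_combination (1 / 2) * hS - (1 / 2) * (S * (2 * k ^ 2 - 1) + β) * hβ
  exact (pow_left_inj₀ (by positivity) hm two_ne_zero).1 hsq

theorem duffing_period_general (hm : 0 < m) (hT : 0 < T)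
    (hf : ∀ t ∈ Icc (-T) T, HasDerivWithinAt f (f' t) (Icc (-T) T) t)
    (hf' : ∀ t ∈ Icc (-T) T, HasDerivWithinAt f' (-f t ^ 3 + β * f t) (Icc (-T) T) t)
    (hleft : f (-T) = 0) (hright : f T = 0) (hleft' : f' (-T) = m)
    (hpos : ∀ t ∈ Ioo (-T) T, 0 < f t) :
    T = ellipticK (√((1 + β / √(2 * m ^ 2 + β ^ 2)) / 2)) /
      (2 * m ^ 2 + β ^ 2) ^ ((1 : ℝ) / 4) := by
  set S := √(2 * m ^ 2 + β ^ 2) with hS_def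
  set k := √((1 + β / S) / 2)
  set ω := (2 * m ^ 2 + β ^ 2) ^ ((1 : ℝ) / 4) with hω_def
  have hR : 0 < 2 * m ^ 2 + β ^ 2 := by positivity
  have hS : 0 < S := sqrt_pos.2 hR
  have hω : 0 < ω := rpow_pos_of_pos hR _
  have hωS : ω ^ 2 = S := by
    rw [hω_def, hS_def, sqrt_eq_rpow, ← rpow_mul_natCast hR.le]
    norm_num
  have hmem := half_one_add_div_mem_Ioo (abs_lt_sqrt_two_mul_sq_add_sq hm.ne' β)
  have hk₀ : 0 < k := sqrt_pos.2 hmem.1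
  have hk_sq : k ^ 2 = (1 + β / S) / 2 := sq_sqrt hmem.1.le
  have hk : k ^ 2 < 1 := hk_sq.trans_lt hmem.2
  have hβ : S * (2 * k ^ 2 - 1) = β := by
    rw [hk_sq]
    field_simp
    ring
  have hm_eq := sqrt_two_mul_mul_mul_sqrt_one_sub_sq hk₀.le hk.le hS.le hm.le (sq_sqrt hR.le) hβ
  rw [← hωS] at hβ hm_eq
  have hwave := eqOn_duffingWave hk hf (by rwa [hβ]) hleft (hleft'.trans hm_eq.symm)
  have hlength := sub_eq_two_mul_ellipticK_div_of_eqOn_duffingWave hk₀ hk hω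
    (neg_lt_self hT) hwave hright hpos
  linear_combination hlength / 2

namespace IsDuffingSolution

variable {n : ℕ}

theorem hasDerivWithinAt (h : IsDuffingSolution n β T f) (s : Set ℝ) (t : ℝ) :
    HasDerivWithinAt f (deriv f t) s t :=
  (h.2.1.differentiable (by simp) t).hasDerivAt.hasDerivWithinAt

theorem hasDerivWithinAt_deriv (h : IsDuffingSolution n β T f) (s : Set ℝ) {t : ℝ}
    (ht : t ∈ Icc (-T) T) : HasDerivWithinAt (deriv f) (-f t ^ 3 + β * f t) s t := by
  rw [← h.2.2.1 t ht]
  have hderiv : ContDiff ℝ (⊤ : ℕ∞) (deriv f) := (contDiff_infty_iff_deriv.1 h.2.1).2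
  exact (hderiv.differentiable (by simp) t).hasDerivAt.hasDerivWithinAt

end IsDuffingSolution

end Duffing

/-- `T = K(k) / (2m² + β²)^{1/4}`, where `K` is the complete elliptic integral
of the first kind. -/
theorem duffing_period (m : ℕ) (hm : 0 < m) (β T : ℝ) (f : ℝ → ℝ)
    (h : IsDuffingSolution m β T f) :
    T = (∫ x in (0:ℝ)..1,
          1 / (Real.sqrt (1 - x ^ 2) *
                Real.sqrt (1 - (duffingModulus m β) ^ 2 * x ^ 2))) /
        (2 * (m : ℝ) ^ 2 + β ^ 2) ^ ((1 : ℝ) / 4) := by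
  have ⟨hT, _, _, hleft, hright, hleft', _, hpos⟩ := h
  exact duffing_period_general (Nat.cast_pos.2 hm) hT (fun t _ ↦ h.hasDerivWithinAt _ t)
    (fun t ht ↦ h.hasDerivWithinAt_deriv _ ht) hleft hright hleft' hpos
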